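/- Let y = exp(11·π·i/6) ∈ ℂ and b_l = 2·i·sin(11·π·l/12) for positive integers l. Then y^6 · (b_1^3/b_2^3) · ((b_1 + b_3)/b_3) · ((b_10·b_9·b_8)/(b_7·b_6·b_5)) · ((b_3·b_4 + b_1·b_4 + b_1·b_2)/(b_3·b_4)) ≠ 0. -/

import Mathlib

/-! Put `x = exp (11πi/12)`, so that `y = x²` and `b l = xˡ - x⁻ˡ`. The identities
`b 2 * b (n + 1) = b 1 * (b n + b (n + 2))` and `b (n + 1) ^ 2 = b n * b (n + 2) + b 1 ^ 2`
give `b 1 + b 3 = b 2 ^ 2 / b 1` and `b 3 * b 4 + b 1 * b 4 + b 1 * b 2 = b 2 * b 3 ^ 2 / b 1`,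
so the entry collapses to `y ^ 6 * (b 1 * b 8 * b 9 * b 10) / (b 4 * b 5 * b 6 * b 7)`.
Since `b l = 0` exactly when `y ^ l = 1`, and `y` is a primitive twelfth root of unity, none of
`b 1, …, b 10` vanishes. -/

section QBracket

variable {K : Type*} [Field K] {x : K}

/-- The unnormalised quantum integer `xˡ - x⁻ˡ`, which is the paper's `[l]′ = y^(l/2) - y^(-l/2)`
for a chosen square root `x` of `y`. -/
def qBracket (x : K) (l : ℕ) : K := x ^ l - (x ^ l)⁻¹

theorem qBracket_eq_zero_iff (hx : x ≠ 0) (l : ℕ) : qBracket x l = 0 ↔ (x ^ 2) ^ l = 1 := by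
  rw [qBracket, sub_eq_zero, ← mul_eq_one_iff_eq_inv₀ (pow_ne_zero l hx), ← mul_pow, sq]

theorem qBracket_two_mul_qBracket_succ (hx : x ≠ 0) (n : ℕ) :
    qBracket x 2 * qBracket x (n + 1) = qBracket x 1 * (qBracket x n + qBracket x (n + 2)) := by
  simp only [qBracket]
  field_simp
  ring

theorem qBracket_succ_sq (hx : x ≠ 0) (n : ℕ) :
    qBracket x (n + 1) ^ 2 = qBracket x n * qBracket x (n + 2) + qBracket x 1 ^ 2 := by
  simp only [qBracket]
  field_simp
  ring

theorem qBracket_one_add_three (hx : x ≠ 0) (h : qBracket x 1 ≠ 0) :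
    qBracket x 1 + qBracket x 3 = qBracket x 2 ^ 2 / qBracket x 1 := by
  rw [eq_div_iff h]
  linear_combination -qBracket_two_mul_qBracket_succ hx 1

theorem qBracket_three_mul_four_add (hx : x ≠ 0) (h : qBracket x 1 ≠ 0) :
    qBracket x 3 * qBracket x 4 + qBracket x 1 * qBracket x 4 + qBracket x 1 * qBracket x 2 =
      qBracket x 2 * qBracket x 3 ^ 2 / qBracket x 1 := by
  rw [eq_div_iff h]
  linear_combination -qBracket x 4 * qBracket_two_mul_qBracket_succ hx 1 -
    qBracket x 2 * qBracket_succ_sq hx 2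

theorem stmt_4_general {y : K} (hx : x ≠ 0) (hxy : x ^ 2 = y)
    (hy : ∀ l ∈ Finset.Icc 1 10, y ^ l ≠ 1) :
    let b : ℕ → K := qBracket x
    y ^ 6 * (b 1 ^ 3 / b 2 ^ 3) * ((b 1 + b 3) / b 3) *
        ((b 10 * b 9 * b 8) / (b 7 * b 6 * b 5)) *
        ((b 3 * b 4 + b 1 * b 4 + b 1 * b 2) / (b 3 * b 4)) ≠ 0 := by
  intro b
  have hb : ∀ l ∈ Finset.Icc 1 10, qBracket x l ≠ 0 := fun l hl ↦
    (qBracket_eq_zero_iff hx l).not.mpr (hxy ▸ hy l hl)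
  have hb₁ : qBracket x 1 ≠ 0 := hb 1 (by decide)
  simp only [b]
  rw [qBracket_one_add_three hx hb₁, qBracket_three_mul_four_add hx hb₁, ← hxy]
  simp [hx, hb]

end QBracket

theorem qBracket_exp_mul_I (θ : ℂ) (l : ℕ) :
    qBracket (Complex.exp (θ * Complex.I)) l = 2 * Complex.I * Complex.sin (θ * l) := by
  have hpow : Complex.exp (θ * Complex.I) ^ l = Complex.exp (θ * l * Complex.I) := by
    rw [← Complex.exp_nat_mul, mul_left_comm, mul_assoc]
  rw [qBracket, hpow, ← Complex.exp_neg, mul_right_comm 2 Complex.I, Complex.two_sin, ← neg_mul]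
  linear_combination (Complex.exp (θ * l * Complex.I) - Complex.exp (-(θ * l) * Complex.I)) *
    Complex.I_sq

theorem isPrimitiveRoot_exp_eleven_pi_mul_I_div_six :
    IsPrimitiveRoot (Complex.exp (11 * Real.pi * Complex.I / 6)) 12 := by
  convert Complex.isPrimitiveRoot_exp_of_coprime 11 12 (by norm_num) (by norm_num) using 2
  push_cast
  ring

/-- nonvanishing of the braiding-matrix entry (B_{2,2}^{2,2})_{2,1} for the
3C-algebra (minimal model L(21/22,0), Kac parameters p = 11, p' = 12). -/
theorem stmt_4 :
    let y : ℂ := Complex.exp (11 * Real.pi * Complex.I / 6)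
    let b : ℕ → ℂ := fun l => 2 * Complex.I * Real.sin (11 * Real.pi * l / 12)
    y ^ 6 * (b 1 ^ 3 / b 2 ^ 3) * ((b 1 + b 3) / b 3) *
        ((b 10 * b 9 * b 8) / (b 7 * b 6 * b 5)) *
        ((b 3 * b 4 + b 1 * b 4 + b 1 * b 2) / (b 3 * b 4)) ≠ 0 := by
  intro y b
  have hxy : Complex.exp (11 * Real.pi / 12 * Complex.I) ^ 2 = y := by
    rw [← Complex.exp_nat_mul]
    congr 1
    push_cast
    ring
  have hb : b = qBracket (Complex.exp (11 * Real.pi / 12 * Complex.I)) := by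
    funext l
    rw [qBracket_exp_mul_I, div_mul_eq_mul_div]
    simp [b]
  rw [hb]
  exact stmt_4_general (Complex.exp_ne_zero _) hxy fun l hl ↦
    isPrimitiveRoot_exp_eleven_pi_mul_I_div_six.pow_ne_one_of_pos_of_lt (by grind) (by grind)
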